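/- (Deformations of the space of symbols S³₄ = F₁ ⊕ F₂ ⊕ F₃ ⊕ F₄.) On quadruples (f₁,f₂,f₃,f₄) of polynomials, let L_X(f₁,f₂,f₃,f₄) = (L_X¹f₁, L_X²f₂, L_X³f₃, L_X⁴f₄), and define the operators C_{i,i}(X) multiplying the i-th component by X′ (i = 1,2,3,4), C_{1,3}(X) sending (f₁,f₂,f₃,f₄) to (0,0,X‴f₁ + 2X″f₁′,0), C_{2,4}(X) sending it to (0,0,0,X‴f₂ + 2X″f₂′), and C_{1,4}(X) sending it to (0,0,0,X‴f₁′ + X″f₁″). Suppose the real parameters satisfy t_{1,3}(t_{1,1} − t_{3,3}) = 0, t_{2,4}(t_{2,2} − t_{4,4}) = 0, and t_{1,4}(t_{1,1} − t_{4,4}) = 0. Then ℒ_X = L_X + t_{1,1}C_{1,1}(X) + t_{2,2}C_{2,2}(X) + t_{3,3}C_{3,3}(X) + t_{4,4}C_{4,4}(X) + t_{1,3}C_{1,3}(X) + t_{2,4}C_{2,4}(X) + t_{1,4}C_{1,4}(X) defines a Vect(1)-action: ℒ_{[X,Y]} = ℒ_X ∘ ℒ_Y − ℒ_Y ∘ ℒ_X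 for all X, Y ∈ ℝ[x]. -/

import Mathlib

noncomputable section

/-- Polynomials over ℝ, identified with polynomial vector fields / densities on the line. -/
abbrev P : Type := Polynomial ℝ

/-- Derivative d/dx. -/
def D : P → P := fun f => Polynomial.derivative f

/-- Iterated derivative: `Dk k f = f^(k)`. -/
def Dk (k : ℕ) : P → P := D^[k]

/-- Lie bracket on Vect(1): [X,Y] = XY' - X'Y. -/
def br (X Y : P) : P := X * D Y - D X * Y

/-- Action of the vector field X on λ-densities: `L_X^λ f = X f' + λ X' f`. -/
def Lw (l : ℝ) (X f : P) : P := X * D f + Polynomial.C l * D X * f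

/-- Action on operators from F_ν to F_μ: `L_X^{ν,μ}(A) = L_X^μ ∘ A - A ∘ L_X^ν`. -/
def LD (nu mu : ℝ) (X : P) (A : P → P) (f : P) : P := Lw mu X (A f) - A (Lw nu X f)

/-- 1-cocycle condition with values in D_{ν,μ}. -/
def IsCocycle1 (nu mu : ℝ) (c : P → P → P) : Prop :=
  ∀ X Y f, c (br X Y) f = LD nu mu X (c Y) f - LD nu mu Y (c X) f

/-- 2-cocycle condition with values in D_{ν,μ}. -/
def IsCocycle2 (nu mu : ℝ) (o : P → P → P → P) : Prop :=
  ∀ X Y Z f,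
    LD nu mu X (o Y Z) f - LD nu mu Y (o X Z) f + LD nu mu Z (o X Y) f
      - o (br X Y) Z f + o (br X Z) Y f - o (br Y Z) X f = 0

/-- Cup product of 1-cochains: `[[C₁,C₂]](X,Y) = C₁(X)∘C₂(Y) - C₁(Y)∘C₂(X)`. -/
def cup (c₁ c₂ : P → P → P) (X Y f : P) : P := c₁ X (c₂ Y f) - c₁ Y (c₂ X f)

/-- Coboundary of a 1-cochain b with values in D_{ν,μ}. -/
def cob (nu mu : ℝ) (b : P → P → P) (X Y f : P) : P :=
  LD nu mu X (b Y) f - LD nu mu Y (b X) f - b (br X Y) f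


/-- The space of symbols `S³₄ = F₁ ⊕ F₂ ⊕ F₃ ⊕ F₄`, as quadruples of polynomials. -/
abbrev V4 : Type := P × P × P × P

/-- The Lie derivative on `S³₄`. -/
def L4 (X : P) (v : V4) : V4 :=
  (Lw 1 X v.1, Lw 2 X v.2.1, Lw 3 X v.2.2.1, Lw 4 X v.2.2.2)

def C11' (X : P) (v : V4) : V4 := (D X * v.1, 0, 0, 0)
def C22' (X : P) (v : V4) : V4 := (0, D X * v.2.1, 0, 0)
def C33' (X : P) (v : V4) : V4 := (0, 0, D X * v.2.2.1, 0)
def C44' (X : P) (v : V4) : V4 := (0, 0, 0, D X * v.2.2.2)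
def C13' (X : P) (v : V4) : V4 := (0, 0, Dk 3 X * v.1 + 2 * Dk 2 X * D v.1, 0)
def C24' (X : P) (v : V4) : V4 := (0, 0, 0, Dk 3 X * v.2.1 + 2 * Dk 2 X * D v.2.1)
def C14' (X : P) (v : V4) : V4 := (0, 0, 0, Dk 3 X * D v.1 + Dk 2 X * Dk 2 v.1)

/-- The deformed action on `S³₄`. -/
def LL (t11 t22 t33 t44 t13 t24 t14 : ℝ) (X : P) (v : V4) : V4 :=
  L4 X v + t11 • C11' X v + t22 • C22' X v + t33 • C33' X v + t44 • C44' X v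
    + t13 • C13' X v + t24 • C24' X v + t14 • C14' X v

/-!
Since `L_X^l + t X' = L_X^(l + t)`, the diagonal terms only shift the weights of the four density
modules. The remaining terms map `F₁ ⊕ F₂` to `F₃ ⊕ F₄`, so all their products vanish, and the
deformation is an action as soon as each of them is a 1-cocycle for the shifted weights. Now
`X''' f + 2 X'' f'` and `X''' f' + X'' f''` are cocycles from weight `l` to weight `l + 2`,
respectively `l + 3`, for every real `l`, and the integrability conditions say that the deformed
weights still differ by 2, respectively 3, unless the coefficient of the cocycle vanishes.

The two cocycle identities follow from the Leibniz rule for `L_X` on products of densities and from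
the cocycles `X ↦ X''` and `X ↦ X'''` with values in `F₁` and `F₂`. The only error terms come from
the failure `(L_X^l f)' - L_X^(l + 1) f' = l X'' f` of `d/dx` to be equivariant, and they are
symmetric in the two vector fields.
-/

/-- The action identity for a family of maps `ρ X : M → M` indexed by the vector fields `X`: the
bracket of Vect(1) goes to the commutator. Linearity of `ρ` is not part of the notion. -/
def IsVectAction {M : Type*} [Sub M] (ρ : P → M → M) : Prop :=
  ∀ X Y v, ρ (br X Y) v = ρ X (ρ Y v) - ρ Y (ρ X v)

/-- The cochain with values in `D_{l,l+2}` underlying `C13'` and `C24'`; its formula does not depend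
on the weight `l`. -/
def cocycleTwo (X f : P) : P := Dk 3 X * f + 2 * Dk 2 X * D f

/-- The cochain with values in `D_{l,l+3}` underlying `C14'`; its formula does not depend on the
weight `l`. -/
def cocycleThree (X f : P) : P := Dk 3 X * D f + Dk 2 X * Dk 2 f

/-- The operators on quadruples of densities of weights `w₁, w₂, w₃, w₄` given by the Lie derivative
on the diagonal and by a cochain `cᵢⱼ` mapping the `i`-th component to the `j`-th. -/
def triangularAction (w₁ w₂ w₃ w₄ : ℝ) (c₁₃ c₂₄ c₁₄ : P → P → P) (X : P) (v : V4) : V4 :=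
  (Lw w₁ X v.1, Lw w₂ X v.2.1, Lw w₃ X v.2.2.1 + c₁₃ X v.1,
    Lw w₄ X v.2.2.2 + c₂₄ X v.2.1 + c₁₄ X v.1)

section Derivative

theorem D_add (f g : P) : D (f + g) = D f + D g :=
  Polynomial.derivative_add

theorem D_sub (f g : P) : D (f - g) = D f - D g :=
  Polynomial.derivative_sub

theorem D_mul (f g : P) : D (f * g) = D f * g + f * D g :=
  Polynomial.derivative_mul

theorem D_C (r : ℝ) : D (Polynomial.C r) = 0 :=
  Polynomial.derivative_C

theorem D_D (f : P) : D (D f) = Dk 2 f :=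
  rfl

theorem D_Dk (k : ℕ) (f : P) : D (Dk k f) = Dk (k + 1) f :=
  (Function.iterate_succ_apply' D k f).symm

end Derivative

section LieDerivative

theorem Lw_add (l : ℝ) (X f g : P) : Lw l X (f + g) = Lw l X f + Lw l X g := by
  simp only [Lw, D_add]
  ring

theorem Lw_smul (l t : ℝ) (X f : P) : Lw l X (t • f) = t • Lw l X f := by
  simp only [Lw, Polynomial.smul_eq_C_mul, D_mul, D_C]
  ring

theorem Lw_mul (l m : ℝ) (X f g : P) :
    Lw (l + m) X (f * g) = Lw l X f * g + f * Lw m X g := by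
  simp only [Lw, D_mul, map_add]
  ring

theorem Lw_add_weight (l t : ℝ) (X f : P) : Lw (l + t) X f = Lw l X f + t • (D X * f) := by
  simp only [Lw, map_add, Polynomial.smul_eq_C_mul]
  ring

theorem D_Lw (l : ℝ) (X f : P) :
    D (Lw l X f) = Lw (l + 1) X (D f) + Polynomial.C l * Dk 2 X * f := by
  simp only [Lw, D_add, D_mul, D_D, D_C, map_add, map_one]
  ring

theorem Dk_two_Lw (l : ℝ) (X f : P) :
    Dk 2 (Lw l X f) = Lw (l + 2) X (Dk 2 f) + Polynomial.C (2 * l + 1) * Dk 2 X * D f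
      + Polynomial.C l * Dk 3 X * f := by
  have hweight : l + 1 + 1 = l + 2 := by ring
  rw [← D_D, D_Lw, D_add, D_Lw, hweight]
  simp only [D_mul, D_D, D_Dk, D_C, map_add, map_mul, map_one, map_ofNat]
  ring

end LieDerivative

section Bracket

theorem D_br (X Y : P) : D (br X Y) = X * Dk 2 Y - Dk 2 X * Y := by
  simp only [br, D_sub, D_mul, D_D]
  ring

theorem Dk_two_br (X Y : P) : Dk 2 (br X Y) = Lw 1 X (Dk 2 Y) - Lw 1 Y (Dk 2 X) := by
  rw [← D_D, D_br]
  simp only [Lw, D_sub, D_mul, D_Dk, map_one]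
  ring

theorem Dk_three_br (X Y : P) : Dk 3 (br X Y) = Lw 2 X (Dk 3 Y) - Lw 2 Y (Dk 3 X) := by
  have hweight : (1 : ℝ) + 1 = 2 := by norm_num
  rw [← D_Dk 2, Dk_two_br, D_sub, D_Lw, D_Lw, D_Dk, D_Dk, hweight]
  ring

theorem isVectAction_Lw (l : ℝ) : IsVectAction (Lw l) := by
  intro X Y f
  simp only [Lw, D_br, D_add, D_mul, D_D, D_C]
  simp only [br]
  ring

end Bracket

section Cocycle

theorem LD_smul (nu mu t : ℝ) (X : P) (A : P → P) (f : P) :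
    LD nu mu X (t • A) f = t • LD nu mu X A f := by
  simp only [LD, Pi.smul_apply, Lw_smul, smul_sub]

theorem IsCocycle1.smul {nu mu : ℝ} {c : P → P → P} (hc : IsCocycle1 nu mu c) (t : ℝ) :
    IsCocycle1 nu mu (t • c) := by
  intro X Y f
  simp only [Pi.smul_apply, LD_smul, hc X Y f, smul_sub]

theorem isCocycle1_zero (nu mu : ℝ) : IsCocycle1 nu mu 0 := by
  intro X Y f
  simp [LD, Lw, D]

theorem isCocycle1_smul_of_mul_eq_zero {c : P → P → P} {k t nu mu : ℝ}
    (hc : ∀ l, IsCocycle1 l (l + k) c) (h : t * (nu + k - mu) = 0) :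
    IsCocycle1 nu mu (t • c) := by
  rcases mul_eq_zero.mp h with rfl | hweight
  · simpa only [zero_smul] using isCocycle1_zero nu mu
  · obtain rfl : nu + k = mu := sub_eq_zero.mp hweight
    exact (hc nu).smul t

theorem LD_cocycleTwo (l : ℝ) (X Y f : P) :
    LD l (l + 2) X (cocycleTwo Y) f = Lw 2 X (Dk 3 Y) * f + 2 * Lw 1 X (Dk 2 Y) * D f
      - 2 * Polynomial.C l * (Dk 2 X * Dk 2 Y) * f := by
  have hDk3 : Lw (l + 2) X (Dk 3 Y * f) = Lw 2 X (Dk 3 Y) * f + Dk 3 Y * Lw l X f := by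
    rw [add_comm l, Lw_mul]
  have hDk2 : Lw (l + 2) X (2 * Dk 2 Y * D f)
      = 2 * Lw 1 X (Dk 2 Y) * D f + 2 * Dk 2 Y * Lw (l + 1) X (D f) := by
    rw [mul_assoc, two_mul, Lw_add, show l + 2 = 1 + (l + 1) by ring, Lw_mul]
    ring
  simp only [LD, cocycleTwo, Lw_add, hDk3, hDk2, D_Lw]
  ring

theorem isCocycle1_cocycleTwo (l : ℝ) : IsCocycle1 l (l + 2) cocycleTwo := by
  intro X Y f
  rw [LD_cocycleTwo, LD_cocycleTwo, cocycleTwo, Dk_three_br, Dk_two_br]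
  ring

theorem LD_cocycleThree (l : ℝ) (X Y f : P) :
    LD l (l + 3) X (cocycleThree Y) f = Lw 2 X (Dk 3 Y) * D f + Lw 1 X (Dk 2 Y) * Dk 2 f
      - Polynomial.C (2 * l + 1) * (Dk 2 X * Dk 2 Y) * D f
      - Polynomial.C l * (Dk 2 X * Dk 3 Y + Dk 3 X * Dk 2 Y) * f := by
  have hDk3 : Lw (l + 3) X (Dk 3 Y * D f)
      = Lw 2 X (Dk 3 Y) * D f + Dk 3 Y * Lw (l + 1) X (D f) := by
    rw [← Lw_mul, show 2 + (l + 1) = l + 3 by ring]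
  have hDk2 : Lw (l + 3) X (Dk 2 Y * Dk 2 f)
      = Lw 1 X (Dk 2 Y) * Dk 2 f + Dk 2 Y * Lw (l + 2) X (Dk 2 f) := by
    rw [← Lw_mul, show 1 + (l + 2) = l + 3 by ring]
  simp only [LD, cocycleThree, Lw_add, hDk3, hDk2, D_Lw, Dk_two_Lw]
  ring

theorem isCocycle1_cocycleThree (l : ℝ) : IsCocycle1 l (l + 3) cocycleThree := by
  intro X Y f
  rw [LD_cocycleThree, LD_cocycleThree, cocycleThree, Dk_three_br, Dk_two_br]
  ring

end Cocycle

section Deformation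

theorem isVectAction_triangularAction {w₁ w₂ w₃ w₄ : ℝ} {c₁₃ c₂₄ c₁₄ : P → P → P}
    (h₁₃ : IsCocycle1 w₁ w₃ c₁₃) (h₂₄ : IsCocycle1 w₂ w₄ c₂₄) (h₁₄ : IsCocycle1 w₁ w₄ c₁₄) :
    IsVectAction (triangularAction w₁ w₂ w₃ w₄ c₁₃ c₂₄ c₁₄) := by
  rintro X Y ⟨f₁, f₂, f₃, f₄⟩
  have h₁₃' := h₁₃ X Y f₁
  have h₂₄' := h₂₄ X Y f₂
  have h₁₄' := h₁₄ X Y f₁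
  simp only [LD] at h₁₃' h₂₄' h₁₄'
  refine Prod.ext (isVectAction_Lw w₁ X Y f₁) <| Prod.ext (isVectAction_Lw w₂ X Y f₂) <|
    Prod.ext ?_ ?_
  · simp only [triangularAction, Prod.snd_sub, Prod.fst_sub, Lw_add]
    linear_combination isVectAction_Lw w₃ X Y f₃ + h₁₃'
  · simp only [triangularAction, Prod.snd_sub, Lw_add]
    linear_combination isVectAction_Lw w₄ X Y f₄ + h₂₄' + h₁₄'

theorem LL_eq_triangularAction (t11 t22 t33 t44 t13 t24 t14 : ℝ) :
    LL t11 t22 t33 t44 t13 t24 t14 =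
      triangularAction (1 + t11) (2 + t22) (3 + t33) (4 + t44)
        (t13 • cocycleTwo) (t24 • cocycleTwo) (t14 • cocycleThree) := by
  funext X v
  simp only [LL, L4, C11', C22', C33', C44', C13', C24', C14', triangularAction, Lw_add_weight,
    Pi.smul_apply, cocycleTwo, cocycleThree, Prod.smul_mk, Prod.mk_add_mk, smul_zero, add_zero]

end Deformation

/-- under the integrability conditions, the deformed action on `S³₄`
defines a Vect(1)-action. -/
theorem deformation_of_S34 (t11 t22 t33 t44 t13 t24 t14 : ℝ)
    (h1 : t13 * (t11 - t33) = 0)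
    (h2 : t24 * (t22 - t44) = 0)
    (h3 : t14 * (t11 - t44) = 0) :
    ∀ X Y : P, ∀ v : V4,
      LL t11 t22 t33 t44 t13 t24 t14 (br X Y) v
        = LL t11 t22 t33 t44 t13 t24 t14 X (LL t11 t22 t33 t44 t13 t24 t14 Y v)
          - LL t11 t22 t33 t44 t13 t24 t14 Y (LL t11 t22 t33 t44 t13 t24 t14 X v) := by
  rw [LL_eq_triangularAction]
  apply isVectAction_triangularAction
  · exact isCocycle1_smul_of_mul_eq_zero isCocycle1_cocycleTwo (by linear_combination h1)
  · exact isCocycle1_smul_of_mul_eq_zero isCocycle1_cocycleTwo (by linear_combination h2)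
  · exact isCocycle1_smul_of_mul_eq_zero isCocycle1_cocycleThree (by linear_combination h3)
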